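/- arXiv:1609.05890 — 2 statements merged into one kernel-verified Lean document; each statement's English description precedes it below -/
import Mathlib

section
/- Let A ∈ C_2 with rank A = 2. Then the dimension of the face F(A) of C_2 generated by A is either 0 or 2. -/
open Matrix
open scoped ComplexOrder

noncomputable section

/-- `Cset n` is the set of n²×n² complex positive semidefinite matrices, written in block
form with blocks indexed by pairs `(i,k)` (block row `i`, inner row `k`), whose `(i,j)`
blocks have trace `δ_{ij}`.  It corresponds to the set of quantum channels via the Choi
matrix. -/
def Cset (n : ℕ) : Set (Matrix (Fin n × Fin n) (Fin n × Fin n) ℂ) :=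
  {A | A.PosSemidef ∧
    ∀ i j : Fin n, ∑ k : Fin n, A (i, k) (j, k) = if i = j then 1 else 0}

/-- `F` is a face of the convex set `C`: a convex subset such that whenever a point of `F`
lies in the open segment between two points of `C`, both endpoints lie in `F`. -/
def IsFace {V : Type*} [AddCommGroup V] [Module ℝ V] (C F : Set V) : Prop :=
  F ⊆ C ∧ Convex ℝ F ∧
    ∀ x ∈ C, ∀ y ∈ C, ∀ t : ℝ, 0 < t → t < 1 → t • x + (1 - t) • y ∈ F → x ∈ F ∧ y ∈ F

/-- The face of `C` generated by `A`: the smallest face of `C` containing `A`. -/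
def faceGen {V : Type*} [AddCommGroup V] [Module ℝ V] (C : Set V) (A : V) : Set V :=
  ⋂₀ {F : Set V | IsFace C F ∧ A ∈ F}

/-- The dimension of a face: the dimension of its affine hull as a real affine subspace. -/
def faceDim {V : Type*} [AddCommGroup V] [Module ℝ V] (F : Set V) : ℕ :=
  Module.finrank ℝ ↥(vectorSpan ℝ F)

/-!
A positive semidefinite matrix of rank `r` is `V Vᴴ` for an injective `V` with `r` columns, and the
points of its face are the `V H Vᴴ` with `H ≥ 0` satisfying the trace conditions. So the directions
of the face are the `V H Vᴴ` with `H` Hermitian in the kernel of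
`H ↦ ∑ k l, H k l • (K k * (K l)ᴴ)`, where the `K k` are the columns of `V` read as matrices, and
the dimension of the face is the complex dimension of that kernel.

For `2 × 2` matrices and `r = 2`, suppose that the kernel is nonzero. Diagonalising a Hermitian
element of it by a unitary, absorbed into `V`, gives a relation `a P Pᴴ + b Q Qᴴ = 0` between the
two operators `P` and `Q`; together with `P Pᴴ + Q Qᴴ = 1` it forces both to be multiples of
unitaries. Then `Q Pᴴ` is a multiple of the inverse of `P Qᴴ`, which by Cayley–Hamilton lies in the
span of `1` and `P Qᴴ`. So the range has dimension two, and the kernel has dimension `4 - 2 = 2`.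
-/

open Module
open scoped ComplexStarModule

section SelfAdjointPoints

variable {E : Type*} [AddCommGroup E] [Module ℂ E] [StarAddMonoid E] [StarModule ℂ E]

/-- The real subspace of self-adjoint elements of a complex subspace `S`; it is a real form of `S`
as soon as `S` is stable under `star`. -/
def selfAdjointPoints (S : Submodule ℂ E) : Submodule ℝ E :=
  S.restrictScalars ℝ ⊓ selfAdjoint.submodule ℝ E

lemma mem_selfAdjointPoints {S : Submodule ℂ E} {x : E} :
    x ∈ selfAdjointPoints S ↔ x ∈ S ∧ IsSelfAdjoint x :=
  Iff.rfl

lemma realPart_mem_selfAdjointPoints {S : Submodule ℂ E} (hS : ∀ x ∈ S, star x ∈ S) {x : E}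
    (hx : x ∈ S) : (ℜ x : E) ∈ selfAdjointPoints S := by
  refine mem_selfAdjointPoints.2 ⟨?_, (ℜ x).2⟩
  rw [realPart_apply_coe]
  exact S.smul_of_tower_mem (2⁻¹ : ℝ) (S.add_mem hx (hS x hx))

lemma imaginaryPart_mem_selfAdjointPoints {S : Submodule ℂ E} (hS : ∀ x ∈ S, star x ∈ S) {x : E}
    (hx : x ∈ S) : (ℑ x : E) ∈ selfAdjointPoints S := by
  refine mem_selfAdjointPoints.2 ⟨?_, (ℑ x).2⟩
  rw [imaginaryPart_apply_coe]
  exact S.smul_mem _ (S.smul_of_tower_mem (2⁻¹ : ℝ) (S.sub_mem hx (hS x hx)))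

lemma finrank_selfAdjointPoints [FiniteDimensional ℂ E] {S : Submodule ℂ E}
    (hS : ∀ x ∈ S, star x ∈ S) : finrank ℝ (selfAdjointPoints S) = finrank ℂ S := by
  let T := selfAdjointPoints S
  let f : T × T →ₗ[ℝ] E := T.subtype.coprod (Complex.I • T.subtype)
  have f_apply (a b : T) : f (a, b) = (a : E) + Complex.I • (b : E) := rfl
  have hf : Function.Injective f := by
    rw [← LinearMap.ker_eq_bot, LinearMap.ker_eq_bot']
    rintro ⟨a, b⟩ hab
    have hre : (ℜ (f (a, b)) : E) = a := by
      rw [f_apply, map_add, realPart_I_smul, b.2.2.imaginaryPart, neg_zero, add_zero,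
        a.2.2.coe_realPart]
    have him : (ℑ (f (a, b)) : E) = b := by
      rw [f_apply, map_add, imaginaryPart_I_smul, a.2.2.imaginaryPart, zero_add,
        b.2.2.coe_realPart]
    rw [hab, map_zero] at hre him
    exact Prod.ext (Subtype.ext hre.symm) (Subtype.ext him.symm)
  have hrange : f.range = S.restrictScalars ℝ := by
    refine le_antisymm ?_ fun x hx ↦ ?_
    · rintro _ ⟨⟨a, b⟩, rfl⟩
      exact S.add_mem a.2.1 (S.smul_mem _ b.2.1)
    · exact ⟨(⟨_, realPart_mem_selfAdjointPoints hS hx⟩,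
        ⟨_, imaginaryPart_mem_selfAdjointPoints hS hx⟩), realPart_add_I_smul_imaginaryPart x⟩
  have hcount : 2 * finrank ℝ T = 2 * finrank ℂ S := calc
    2 * finrank ℝ T = finrank ℝ (T × T) := by rw [finrank_prod, two_mul]
    _ = finrank ℝ f.range := (LinearMap.finrank_range_of_inj hf).symm
    _ = finrank ℝ S := by rw [hrange]; rfl
    _ = 2 * finrank ℂ S := finrank_real_of_complex S
  exact Nat.eq_of_mul_eq_mul_left two_pos hcount

end SelfAdjointPoints

section Faces

variable {E : Type*} [AddCommGroup E] [Module ℝ E] {C F : Set E} {x : E}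

lemma mem_faceGen_self : x ∈ faceGen C x :=
  fun _ hF ↦ hF.2

lemma IsFace.faceGen_subset (hF : IsFace C F) (hx : x ∈ F) : faceGen C x ⊆ F :=
  Set.sInter_subset_of_mem ⟨hF, hx⟩

lemma add_mem_faceGen {d : E} (hadd : x + d ∈ C) (hsub : x - d ∈ C) : x + d ∈ faceGen C x := by
  rintro F ⟨hF, hxF⟩
  have hmid : (1 / 2 : ℝ) • (x + d) + (1 - 1 / 2 : ℝ) • (x - d) = x := by module
  exact (hF.2.2 _ hadd _ hsub (1 / 2) (by norm_num) (by norm_num) (by rwa [hmid])).1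

lemma mem_vectorSpan_faceGen {d : E} {c : ℝ} (hc : c ≠ 0) (hadd : x + c • d ∈ C)
    (hsub : x - c • d ∈ C) : d ∈ vectorSpan ℝ (faceGen C x) := by
  have hcd := vsub_mem_vectorSpan ℝ (add_mem_faceGen hadd hsub) mem_faceGen_self
  rwa [vsub_eq_sub, add_sub_cancel_left, Submodule.smul_mem_iff _ hc] at hcd

end Faces

section RankFactorization

variable {𝕜 m r : Type*} [RCLike 𝕜] [Fintype m] [Fintype r]

lemma exists_eq_mul_conjTranspose_of_rank_eq_card {A : Matrix m m 𝕜} (hA : A.PosSemidef)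
    (hrank : A.rank = Fintype.card r) : ∃ V : Matrix m r 𝕜, A = V * Vᴴ := by
  classical
  have hH := hA.isHermitian
  obtain ⟨e⟩ : Nonempty (r ≃ {i // hH.eigenvalues i ≠ 0}) := by
    rw [← Fintype.card_eq, ← hrank, hH.rank_eq_card_non_zero_eigs]
  let U : Matrix m m 𝕜 := hH.eigenvectorUnitary
  let B : Matrix m m 𝕜 := U * diagonal fun i ↦ (√(hH.eigenvalues i) : 𝕜)
  have hB : A = B * Bᴴ := by
    have hD : diagonal (RCLike.ofReal ∘ hH.eigenvalues : m → 𝕜) =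
        diagonal (fun i ↦ (√(hH.eigenvalues i) : 𝕜)) *
          (diagonal fun i ↦ (√(hH.eigenvalues i) : 𝕜))ᴴ := by
      rw [diagonal_conjTranspose, diagonal_mul_diagonal]
      congr 1
      ext i
      simp [← RCLike.ofReal_mul, Real.mul_self_sqrt (hA.eigenvalues_nonneg i)]
    calc A = U * diagonal (RCLike.ofReal ∘ hH.eigenvalues) * Uᴴ := hH.spectral_theorem
      _ = B * Bᴴ := by rw [hD]; simp only [B, conjTranspose_mul, Matrix.mul_assoc]
  refine ⟨B.submatrix id fun k ↦ e k, ?_⟩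
  ext x y
  refine (congrFun₂ hB x y).trans (Fintype.sum_of_injective (fun k ↦ (e k : m))
    (Subtype.val_injective.comp e.injective) _ _ (fun i hi ↦ ?_) fun _ ↦ rfl).symm
  have hi0 : hH.eigenvalues i = 0 := by
    by_contra h
    exact hi ⟨e.symm ⟨i, h⟩, by simp⟩
  simp [B, mul_diagonal, hi0]

lemma exists_mul_eq_one_of_rank_eq_card [DecidableEq r] {V : Matrix m r 𝕜}
    (hV : V.rank = Fintype.card r) : ∃ W : Matrix r m 𝕜, W * V = 1 := by
  rw [← vecMul_surjective_iff_exists_left_inverse]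
  have hrange : Vᵀ.mulVecLin.range = ⊤ := by
    apply Submodule.eq_top_of_finrank_eq
    rw [finrank_fintype_fun_eq_card, ← hV, ← rank_transpose]
    rfl
  intro y
  obtain ⟨x, hx⟩ := LinearMap.range_eq_top.1 hrange y
  exact ⟨x, by rw [← hx, mulVecLin_apply, mulVec_transpose]⟩

end RankFactorization

section PosSemidef

variable {𝕜 m : Type*} [RCLike 𝕜] [Fintype m]

lemma mulVec_eq_zero_of_add_mulVec_eq_zero {X Y : Matrix m m 𝕜} (hX : X.PosSemidef)
    (hY : Y.PosSemidef) {v : m → 𝕜} (h : (X + Y) *ᵥ v = 0) : X *ᵥ v = 0 ∧ Y *ᵥ v = 0 := by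
  have hsum : star v ⬝ᵥ X *ᵥ v + star v ⬝ᵥ Y *ᵥ v = 0 := by
    rw [← dotProduct_add, ← add_mulVec, h, dotProduct_zero]
  obtain ⟨hXv, hYv⟩ := (add_eq_zero_iff_of_nonneg (hX.dotProduct_mulVec_nonneg v)
    (hY.dotProduct_mulVec_nonneg v)).1 hsum
  exact ⟨(hX.dotProduct_mulVec_zero_iff v).1 hXv, (hY.dotProduct_mulVec_zero_iff v).1 hYv⟩

open scoped Matrix.Norms.L2Operator MatrixOrder in
lemma exists_pos_posSemidef_smul_one_add_sub {m : Type*} [Finite m] [DecidableEq m]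
    {H : Matrix m m ℂ} (hH : H.IsHermitian) :
    ∃ c : ℝ, 0 < c ∧ (c • 1 + H).PosSemidef ∧ (c • 1 - H).PosSemidef := by
  cases nonempty_fintype m
  have hsa : IsSelfAdjoint H := hH
  have hle : (‖H‖ • 1 - H).PosSemidef := by
    simpa only [Matrix.le_iff, Algebra.algebraMap_eq_smul_one] using hsa.le_algebraMap_norm_self
  have hge : (H - -(‖H‖ • 1)).PosSemidef := by
    simpa only [Matrix.le_iff, Algebra.algebraMap_eq_smul_one] using hsa.neg_algebraMap_norm_le_self
  refine ⟨‖H‖ + 1, by positivity, ?_, ?_⟩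
  · convert hge.add PosSemidef.one using 1
    module
  · convert hle.add PosSemidef.one using 1
    module

end PosSemidef

section Congruence

variable {R m r s : Type*} [CommRing R] [StarRing R] [Fintype r] [Fintype s]

/-- The linear map `H ↦ V H Vᴴ`. -/
def congruence (V : Matrix m r R) : Matrix r r R →ₗ[R] Matrix m m R :=
  mulRightLinearMap m R Vᴴ ∘ₗ mulLeftLinearMap r R V

lemma congruence_apply (V : Matrix m r R) (H : Matrix r r R) : congruence V H = V * H * Vᴴ :=
  rfl

lemma congruence_one [DecidableEq r] (V : Matrix m r R) : congruence V 1 = V * Vᴴ := by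
  rw [congruence_apply, Matrix.mul_one]

lemma congruence_mul (V : Matrix m r R) (U : Matrix r s R) (H : Matrix s s R) :
    congruence (V * U) H = congruence V (congruence U H) := by
  simp only [congruence_apply, conjTranspose_mul, Matrix.mul_assoc]

lemma conjTranspose_congruence (V : Matrix m r R) (H : Matrix r r R) :
    (congruence V H)ᴴ = congruence V Hᴴ := by
  simp only [congruence_apply, conjTranspose_mul, conjTranspose_conjTranspose, Matrix.mul_assoc]

variable [Fintype m] {V : Matrix m r R} {W : Matrix r m R}

lemma congruence_injective [DecidableEq r] (hWV : W * V = 1) :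
    Function.Injective (congruence V) := by
  refine Function.LeftInverse.injective (g := congruence W) fun H ↦ ?_
  rw [← congruence_mul, hWV, congruence_apply, conjTranspose_one, Matrix.one_mul, Matrix.mul_one]

lemma congruence_congruence_of_ker_le [DecidableEq r] (hWV : W * V = 1) {X : Matrix m m R}
    (hX : X.IsHermitian) (hker : ∀ v, (V * Vᴴ) *ᵥ v = 0 → X *ᵥ v = 0) :
    congruence V (congruence W X) = X := by
  classical
  have hVW : Vᴴ * Wᴴ = 1 := by rw [← conjTranspose_mul, hWV, conjTranspose_one]
  have hzero : V * Vᴴ * (1 - Wᴴ * Vᴴ) = 0 := by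
    rw [Matrix.mul_sub, Matrix.mul_one, Matrix.mul_assoc V, ← Matrix.mul_assoc Vᴴ, hVW,
      Matrix.one_mul, sub_self]
  have hXzero : X * (1 - Wᴴ * Vᴴ) = 0 :=
    ext_col fun j ↦ hker _ (congrArg (fun M ↦ M.col j) hzero)
  have hright : X * (Wᴴ * Vᴴ) = X := by
    rwa [Matrix.mul_sub, Matrix.mul_one, sub_eq_zero, eq_comm] at hXzero
  have hleft : V * W * X = X := by
    simpa only [conjTranspose_mul, conjTranspose_conjTranspose, hX.eq] using
      congrArg conjTranspose hright
  calc congruence V (congruence W X) = V * W * X * (Wᴴ * Vᴴ) := by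
        simp only [congruence_apply, Matrix.mul_assoc]
    _ = X := by rw [hleft, hright]

end Congruence

section KrausMap

variable {R m n r s : Type*} [CommRing R] [Fintype n]

/-- The partial trace over the second factor: the matrix of the traces of the blocks. -/
def partialTrace : Matrix (m × n) (m × n) R →ₗ[R] Matrix m m R where
  toFun B := of fun i j ↦ ∑ k, B (i, k) (j, k)
  map_add' X Y := by ext; simp [Finset.sum_add_distrib]
  map_smul' c X := by ext; simp [Finset.mul_sum]

lemma partialTrace_apply (B : Matrix (m × n) (m × n) R) (i j : m) :
    partialTrace B i j = ∑ k, B (i, k) (j, k) :=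
  rfl

lemma conjTranspose_partialTrace [StarRing R] (B : Matrix (m × n) (m × n) R) :
    (partialTrace B)ᴴ = partialTrace Bᴴ := by
  ext i j
  simp only [conjTranspose_apply, partialTrace_apply, star_sum]

/-- The Kraus operators of the channel with Choi matrix `V * Vᴴ`: the columns of `V`, each read as
an `m × n` matrix. -/
def krausOp (V : Matrix (m × n) r R) (k : r) : Matrix m n R :=
  of fun i j ↦ V (i, j) k

lemma linearIndependent_krausOp [Fintype m] [Finite r] [DecidableEq r] {V : Matrix (m × n) r R}
    {W : Matrix r (m × n) R} (hWV : W * V = 1) : LinearIndependent R (krausOp V) := by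
  cases nonempty_fintype r
  rw [Fintype.linearIndependent_iff]
  intro c hc
  have hVc : V *ᵥ c = 0 := by
    ext ⟨i, j⟩
    have hij := congrFun (congrFun hc i) j
    simpa [krausOp, Matrix.sum_apply, mulVec, dotProduct, mul_comm] using hij
  have hc0 : c = 0 := by
    rw [← one_mulVec c, ← hWV, ← mulVec_mulVec, hVc, mulVec_zero]
  exact congrFun hc0

variable [StarRing R] [Fintype r] [Fintype s]

/-- The map `H ↦ ∑ k l, H k l • (K k * (K l)ᴴ)` attached to the Kraus operators `K` of `V`, in the
form that sends the parameter `H` of a matrix `V H Vᴴ` to the block traces of that matrix. -/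
def krausMap (V : Matrix (m × n) r R) : Matrix r r R →ₗ[R] Matrix m m R :=
  partialTrace ∘ₗ congruence V

lemma krausMap_apply (V : Matrix (m × n) r R) (H : Matrix r r R) :
    krausMap V H = partialTrace (congruence V H) :=
  rfl

lemma krausMap_eq_sum (V : Matrix (m × n) r R) (H : Matrix r r R) :
    krausMap V H = ∑ k, ∑ l, H k l • (krausOp V k * (krausOp V l)ᴴ) := by
  ext i j
  simp only [krausMap_apply, partialTrace_apply, congruence_apply, Matrix.sum_apply,
    Matrix.smul_apply, Matrix.mul_apply, krausOp, of_apply, conjTranspose_apply, smul_eq_mul,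
    Finset.sum_mul, Finset.mul_sum]
  rw [Finset.sum_comm]
  conv_rhs => rw [Finset.sum_comm]
  refine Finset.sum_congr rfl fun l _ ↦ ?_
  rw [Finset.sum_comm]
  refine Finset.sum_congr rfl fun k _ ↦ Finset.sum_congr rfl fun c _ ↦ ?_
  ring

lemma krausMap_diagonal [DecidableEq r] (V : Matrix (m × n) r R) (d : r → R) :
    krausMap V (diagonal d) = ∑ k, d k • (krausOp V k * (krausOp V k)ᴴ) := by
  simp [krausMap_eq_sum, diagonal_apply, ite_smul]

lemma range_krausMap (V : Matrix (m × n) r R) :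
    (krausMap V).range =
      Submodule.span R (Set.range fun p : r × r ↦ krausOp V p.1 * (krausOp V p.2)ᴴ) := by
  refine le_antisymm ?_ (Submodule.span_le.2 ?_)
  · rintro _ ⟨H, rfl⟩
    rw [krausMap_eq_sum]
    exact sum_mem fun k _ ↦ sum_mem fun l _ ↦
      Submodule.smul_mem _ _ (Submodule.subset_span ⟨(k, l), rfl⟩)
  · rintro _ ⟨⟨k, l⟩, rfl⟩
    classical
    refine ⟨single k l 1, ?_⟩
    simp [krausMap_eq_sum, single_apply, ite_and, ite_smul]

lemma krausMap_mul (V : Matrix (m × n) r R) (U : Matrix r s R) (H : Matrix s s R) :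
    krausMap (V * U) H = krausMap V (congruence U H) := by
  rw [krausMap_apply, congruence_mul, krausMap_apply]

lemma star_mem_ker_krausMap (V : Matrix (m × n) r R) {H : Matrix r r R}
    (hH : H ∈ (krausMap V).ker) : star H ∈ (krausMap V).ker := by
  rw [LinearMap.mem_ker, krausMap_apply] at hH ⊢
  rw [star_eq_conjTranspose, ← conjTranspose_congruence, ← conjTranspose_partialTrace, hH,
    conjTranspose_zero]

end KrausMap

section FacesOfCset

variable {n : ℕ} {A : Matrix (Fin n × Fin n) (Fin n × Fin n) ℂ}

lemma mem_Cset_iff : A ∈ Cset n ↔ A.PosSemidef ∧ partialTrace A = 1 := by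
  simp only [Cset, Set.mem_ofPred_eq, ← Matrix.ext_iff, partialTrace_apply, Matrix.one_apply]

lemma convex_Cset : Convex ℝ (Cset n) := by
  intro X hX Y hY a b ha hb hab
  rw [mem_Cset_iff] at hX hY ⊢
  refine ⟨(hX.1.smul ha).add (hY.1.smul hb), ?_⟩
  rw [map_add, LinearMap.map_smul_of_tower, LinearMap.map_smul_of_tower, hX.2, hY.2, ← add_smul,
    hab, one_smul]

lemma isFace_Cset_ker_le (A : Matrix (Fin n × Fin n) (Fin n × Fin n) ℂ) :
    IsFace (Cset n) {X ∈ Cset n | ∀ v, A *ᵥ v = 0 → X *ᵥ v = 0} := by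
  refine ⟨fun X hX ↦ hX.1, ?_, ?_⟩
  · rintro X ⟨hX, hXker⟩ Y ⟨hY, hYker⟩ a b ha hb hab
    refine ⟨convex_Cset hX hY ha hb hab, fun v hv ↦ ?_⟩
    rw [add_mulVec, smul_mulVec, smul_mulVec, hXker v hv, hYker v hv, smul_zero, smul_zero,
      add_zero]
  · rintro X hX Y hY t ht0 ht1 ⟨-, hker⟩
    have hker' (v) (hv : A *ᵥ v = 0) : X *ᵥ v = 0 ∧ Y *ᵥ v = 0 := by
      have h := mulVec_eq_zero_of_add_mulVec_eq_zero (hX.1.smul ht0.le)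
        (hY.1.smul (sub_nonneg.2 ht1.le)) (hker v hv)
      rwa [smul_mulVec, smul_mulVec, smul_eq_zero_iff_right ht0.ne',
        smul_eq_zero_iff_right (sub_pos.2 ht1).ne'] at h
    exact ⟨⟨hX, fun v hv ↦ (hker' v hv).1⟩, ⟨hY, fun v hv ↦ (hker' v hv).2⟩⟩

variable {r : Type*} [Fintype r] {V : Matrix (Fin n × Fin n) r ℂ} {W : Matrix r (Fin n × Fin n) ℂ}

lemma exists_congruence_eq_of_mem_faceGen [DecidableEq r] (hWV : W * V = 1) (hV : V * Vᴴ ∈ Cset n)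
    {X : Matrix (Fin n × Fin n) (Fin n × Fin n) ℂ} (hX : X ∈ faceGen (Cset n) (V * Vᴴ)) :
    ∃ H, IsSelfAdjoint H ∧ krausMap V H = 1 ∧ congruence V H = X := by
  obtain ⟨hXC, hker⟩ := (isFace_Cset_ker_le (V * Vᴴ)).faceGen_subset ⟨hV, fun _ hv ↦ hv⟩ hX
  obtain ⟨hXpos, hXtrace⟩ := mem_Cset_iff.1 hXC
  have hXV := congruence_congruence_of_ker_le hWV hXpos.isHermitian hker
  refine ⟨congruence W X, ?_, by rw [krausMap_apply, hXV, hXtrace], hXV⟩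
  rw [IsSelfAdjoint, star_eq_conjTranspose, conjTranspose_congruence, hXpos.isHermitian.eq]

lemma congruence_mem_vectorSpan_faceGen (hV : V * Vᴴ ∈ Cset n) {H : Matrix r r ℂ}
    (hH : H ∈ selfAdjointPoints (krausMap V).ker) :
    congruence V H ∈ vectorSpan ℝ (faceGen (Cset n) (V * Vᴴ)) := by
  classical
  obtain ⟨hker, hsa⟩ := mem_selfAdjointPoints.1 hH
  have htrace : partialTrace (congruence V H) = 0 := hker
  obtain ⟨-, hVtrace⟩ := mem_Cset_iff.1 hV
  obtain ⟨c, hc, hadd, hsub⟩ := exists_pos_posSemidef_smul_one_add_sub hsa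
  refine mem_vectorSpan_faceGen (inv_ne_zero hc.ne') (mem_Cset_iff.2 ⟨?_, ?_⟩)
    (mem_Cset_iff.2 ⟨?_, ?_⟩)
  · convert (hadd.mul_mul_conjTranspose_same V).smul (inv_nonneg.2 hc.le) using 1
    rw [← congruence_apply, map_add, LinearMap.map_smul_of_tower, congruence_one, smul_add,
      inv_smul_smul₀ hc.ne']
  · rw [map_add, LinearMap.map_smul_of_tower, htrace, smul_zero, add_zero, hVtrace]
  · convert (hsub.mul_mul_conjTranspose_same V).smul (inv_nonneg.2 hc.le) using 1
    rw [← congruence_apply, map_sub, LinearMap.map_smul_of_tower, congruence_one, smul_sub,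
      inv_smul_smul₀ hc.ne']
  · rw [map_sub, LinearMap.map_smul_of_tower, htrace, smul_zero, sub_zero, hVtrace]

lemma vectorSpan_faceGen_Cset [DecidableEq r] (hWV : W * V = 1) (hV : V * Vᴴ ∈ Cset n) :
    vectorSpan ℝ (faceGen (Cset n) (V * Vᴴ)) =
      (selfAdjointPoints (krausMap V).ker).map ((congruence V).restrictScalars ℝ) := by
  refine le_antisymm (Submodule.span_le.2 ?_) ?_
  · rintro _ ⟨X, hX, Y, hY, rfl⟩
    obtain ⟨H, hH, hHtrace, rfl⟩ := exists_congruence_eq_of_mem_faceGen hWV hV hX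
    obtain ⟨G, hG, hGtrace, rfl⟩ := exists_congruence_eq_of_mem_faceGen hWV hV hY
    refine ⟨H - G, mem_selfAdjointPoints.2 ⟨?_, hH.sub hG⟩, map_sub (congruence V) H G⟩
    rw [LinearMap.mem_ker, map_sub, hHtrace, hGtrace, sub_self]
  · rintro _ ⟨H, hH, rfl⟩
    exact congruence_mem_vectorSpan_faceGen hV hH

theorem faceDim_faceGen_Cset [DecidableEq r] (hWV : W * V = 1) (hV : V * Vᴴ ∈ Cset n) :
    faceDim (faceGen (Cset n) (V * Vᴴ)) = finrank ℂ (krausMap V).ker := by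
  have hinj : Function.Injective ((congruence V).restrictScalars ℝ) := congruence_injective hWV
  rw [faceDim, vectorSpan_faceGen_Cset hWV hV,
    ← (Submodule.equivMapOfInjective _ hinj _).finrank_eq,
    finrank_selfAdjointPoints fun _ ↦ star_mem_ker_krausMap V]

end FacesOfCset

section DiagonalKernel

variable {m n r : Type*} [Fintype n] [Fintype r] [DecidableEq r]

lemma exists_unitary_diagonal_mem_ker_krausMap {V : Matrix (m × n) r ℂ}
    (hker : (krausMap V).ker ≠ ⊥) :
    ∃ U ∈ unitaryGroup r ℂ, ∃ d : r → ℂ, d ≠ 0 ∧ krausMap (V * U) (diagonal d) = 0 := by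
  have hne : selfAdjointPoints (krausMap V).ker ≠ ⊥ := by
    rw [Ne, ← Submodule.finrank_eq_zero, finrank_selfAdjointPoints fun _ ↦ star_mem_ker_krausMap V,
      Submodule.finrank_eq_zero]
    exact hker
  obtain ⟨H, ⟨hHker, hH : H.IsHermitian⟩, hH0⟩ := Submodule.exists_mem_ne_zero_of_ne_bot hne
  have hspec : H = congruence (hH.eigenvectorUnitary : Matrix r r ℂ)
      (diagonal (RCLike.ofReal ∘ hH.eigenvalues)) := hH.spectral_theorem
  refine ⟨hH.eigenvectorUnitary, hH.eigenvectorUnitary.2, RCLike.ofReal ∘ hH.eigenvalues, ?_, ?_⟩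
  · intro hd
    have hdiag : diagonal (0 : r → ℂ) = 0 := diagonal_zero
    rw [hd, hdiag, map_zero] at hspec
    exact hH0 hspec
  · rw [krausMap_mul, ← hspec]
    exact hHker

lemma exists_factorization_diagonal_mem_ker_krausMap [Fintype m] {V : Matrix (m × n) r ℂ}
    {W : Matrix r (m × n) ℂ} (hWV : W * V = 1) (hker : (krausMap V).ker ≠ ⊥) :
    ∃ (V' : Matrix (m × n) r ℂ) (W' : Matrix r (m × n) ℂ), V' * V'ᴴ = V * Vᴴ ∧ W' * V' = 1 ∧
      ∃ d : r → ℂ, d ≠ 0 ∧ krausMap V' (diagonal d) = 0 := by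
  obtain ⟨U, hU, hd⟩ := exists_unitary_diagonal_mem_ker_krausMap hker
  refine ⟨V * U, Uᴴ * W, ?_, ?_, hd⟩
  · rw [conjTranspose_mul, Matrix.mul_assoc, ← Matrix.mul_assoc U, ← star_eq_conjTranspose U,
      mem_unitaryGroup_iff.1 hU, Matrix.one_mul]
  · rw [Matrix.mul_assoc, ← Matrix.mul_assoc W, hWV, Matrix.one_mul, ← star_eq_conjTranspose,
      mem_unitaryGroup_iff'.1 hU]

end DiagonalKernel

section TwoByTwo

variable {K : Type*} [Field K]

lemma exists_smul_eq_of_add_eq_of_smul_add_smul_eq_zero {M : Type*} [AddCommGroup M] [Module K M]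
    {x y e : M} {a b : K} (he : e ≠ 0) (hadd : x + y = e) (hab : a ≠ 0 ∨ b ≠ 0)
    (hzero : a • x + b • y = 0) : ∃ c : K, x = c • e := by
  have hne : b - a ≠ 0 := by
    intro h
    obtain rfl : b = a := sub_eq_zero.1 h
    rw [← smul_add, hadd, smul_eq_zero_iff_left he] at hzero
    simp [hzero] at hab
  refine ⟨b / (b - a), ?_⟩
  have hscale : (b - a) • x = b • e := calc
    (b - a) • x = b • (x + y) - (a • x + b • y) := by module
    _ = b • e := by rw [hadd, hzero, sub_zero]
  rw [div_eq_inv_mul, mul_smul, ← hscale, inv_smul_smul₀ hne]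

lemma mul_eq_smul_one_comm {n : Type*} [Fintype n] [DecidableEq n] {X Y : Matrix n n K} {c : K}
    (hc : c ≠ 0) (h : X * Y = c • 1) : Y * X = c • 1 := by
  have hinv : X * (c⁻¹ • Y) = 1 := by rw [Matrix.mul_smul, h, inv_smul_smul₀ hc]
  rw [mul_eq_one_comm, Matrix.smul_mul] at hinv
  rw [← hinv, smul_inv_smul₀ hc]

lemma mem_span_one_self_of_mul_eq_smul_one {M N : Matrix (Fin 2) (Fin 2) K} {c : K} (hc : c ≠ 0)
    (h : M * N = c • 1) : N ∈ Submodule.span K {1, M} := by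
  have hdet : M.det ≠ 0 := by
    intro h0
    have hdetMN := congrArg det h
    rw [det_mul, h0, zero_mul, det_smul, det_one, mul_one] at hdetMN
    exact pow_ne_zero _ hc hdetMN.symm
  have hadj : M.adjugate = M.trace • 1 - M := by
    rw [adjugate_fin_two]
    ext i j
    fin_cases i <;> fin_cases j <;> simp [trace_fin_two]
  have hN : N = (M.det⁻¹ * c) • (M.trace • 1 - M) := by
    have hscale : M.det • N = c • M.adjugate := calc
      M.det • N = M.adjugate * (M * N) := by
        rw [← Matrix.mul_assoc, adjugate_mul, Matrix.smul_mul, Matrix.one_mul]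
      _ = c • M.adjugate := by rw [h, Matrix.mul_smul, Matrix.mul_one]
    rw [← hadj, mul_smul, ← hscale, inv_smul_smul₀ hdet]
  rw [hN]
  exact Submodule.smul_mem _ _ (Submodule.sub_mem _
    (Submodule.smul_mem _ _ (Submodule.subset_span (by simp))) (Submodule.subset_span (by simp)))

lemma span_mul_conjTranspose_eq_span_one [StarRing K] {P Q : Matrix (Fin 2) (Fin 2) K}
    {p q : K} (hp : p ≠ 0) (hq : q ≠ 0) (hP : P * Pᴴ = p • 1) (hQ : Q * Qᴴ = q • 1) :
    Submodule.span K {P * Pᴴ, P * Qᴴ, Q * Pᴴ, Q * Qᴴ} = Submodule.span K {1, P * Qᴴ} := by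
  have hone : (1 : Matrix (Fin 2) (Fin 2) K) ∈ Submodule.span K {1, P * Qᴴ} :=
    Submodule.subset_span (by simp)
  have hmul : P * Qᴴ * (Q * Pᴴ) = (q * p) • 1 := calc
    P * Qᴴ * (Q * Pᴴ) = P * (Qᴴ * Q) * Pᴴ := by simp only [Matrix.mul_assoc]
    _ = (q * p) • 1 := by
      rw [mul_eq_smul_one_comm hq hQ, Matrix.mul_smul, Matrix.mul_one, Matrix.smul_mul, hP,
        smul_smul]
  apply le_antisymm <;> rw [Submodule.span_le]
  · rintro _ (rfl | rfl | rfl | rfl)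
    · exact hP ▸ Submodule.smul_mem _ p hone
    · exact Submodule.subset_span (by simp)
    · exact mem_span_one_self_of_mul_eq_smul_one (mul_ne_zero hq hp) hmul
    · exact hQ ▸ Submodule.smul_mem _ q hone
  · rintro _ (rfl | rfl)
    · rw [← inv_smul_smul₀ hp (1 : Matrix (Fin 2) (Fin 2) K), ← hP]
      exact Submodule.smul_mem _ _ (Submodule.subset_span (by simp))
    · exact Submodule.subset_span (by simp)

lemma linearIndependent_one_mul_conjTranspose [StarRing K] {n : Type*} [Fintype n]
    [DecidableEq n] [Nonempty n] {P Q : Matrix n n K} {q : K} (hq : q ≠ 0) (hQ : Q * Qᴴ = q • 1)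
    (hPQ : LinearIndependent K ![P, Q]) : LinearIndependent K ![1, P * Qᴴ] := by
  rw [LinearIndependent.pair_iff' one_ne_zero]
  intro a ha
  have hdep : q • P + -a • Q = 0 := by
    have haQ : a • Q = q • P := calc
      a • Q = P * Qᴴ * Q := by rw [← ha, Matrix.smul_mul, Matrix.one_mul]
      _ = q • P := by
        rw [Matrix.mul_assoc, mul_eq_smul_one_comm hq hQ, Matrix.mul_smul, Matrix.mul_one]
    rw [neg_smul, haQ, add_neg_cancel]
  exact hq (LinearIndependent.pair_iff.1 hPQ _ _ hdep).1

lemma finrank_span_mul_conjTranspose {P Q : Matrix (Fin 2) (Fin 2) ℂ}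
    (hPQ : LinearIndependent ℂ ![P, Q]) (hone : P * Pᴴ + Q * Qᴴ = 1) {a b : ℂ}
    (hab : a ≠ 0 ∨ b ≠ 0) (hzero : a • (P * Pᴴ) + b • (Q * Qᴴ) = 0) :
    finrank ℂ (Submodule.span ℂ {P * Pᴴ, P * Qᴴ, Q * Pᴴ, Q * Qᴴ}) = 2 := by
  obtain ⟨p, hP⟩ := exists_smul_eq_of_add_eq_of_smul_add_smul_eq_zero one_ne_zero hone hab hzero
  obtain ⟨q, hQ⟩ := exists_smul_eq_of_add_eq_of_smul_add_smul_eq_zero one_ne_zero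
    ((add_comm _ _).trans hone) hab.symm ((add_comm _ _).trans hzero)
  have hp : p ≠ 0 := by
    rintro rfl
    rw [zero_smul, self_mul_conjTranspose_eq_zero] at hP
    exact hPQ.ne_zero 0 hP
  have hq : q ≠ 0 := by
    rintro rfl
    rw [zero_smul, self_mul_conjTranspose_eq_zero] at hQ
    exact hPQ.ne_zero 1 hQ
  have hcard := finrank_span_eq_card (linearIndependent_one_mul_conjTranspose hq hQ hPQ)
  rwa [Matrix.range_cons_cons_empty, Fintype.card_fin,
    ← span_mul_conjTranspose_eq_span_one hp hq hP hQ] at hcard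

lemma finrank_ker_krausMap_eq_two {V : Matrix (Fin 2 × Fin 2) (Fin 2) ℂ}
    (hV : LinearIndependent ℂ (krausOp V)) (hone : krausMap V 1 = 1) {d : Fin 2 → ℂ} (hd : d ≠ 0)
    (hker : krausMap V (diagonal d) = 0) : finrank ℂ (krausMap V).ker = 2 := by
  have hpair : ![krausOp V 0, krausOp V 1] = krausOp V := by
    ext1 k
    fin_cases k <;> rfl
  have hrange : (Set.range fun k : Fin 2 × Fin 2 ↦ krausOp V k.1 * (krausOp V k.2)ᴴ) =
      {krausOp V 0 * (krausOp V 0)ᴴ, krausOp V 0 * (krausOp V 1)ᴴ,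
        krausOp V 1 * (krausOp V 0)ᴴ, krausOp V 1 * (krausOp V 1)ᴴ} := by
    ext X
    simp [Prod.exists, Fin.exists_fin_two, eq_comm, or_assoc]
  have hd01 : d 0 ≠ 0 ∨ d 1 ≠ 0 := by simpa [Function.ne_iff] using hd
  rw [← diagonal_one, krausMap_diagonal, Fin.sum_univ_two] at hone
  rw [krausMap_diagonal, Fin.sum_univ_two] at hker
  have hrank : finrank ℂ (krausMap V).range = 2 := by
    rw [range_krausMap, hrange]
    exact finrank_span_mul_conjTranspose (hpair ▸ hV) (by simpa using hone) hd01 hker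
  have hdim := (krausMap V).finrank_range_add_finrank_ker
  rw [hrank, finrank_matrix, Fintype.card_fin, finrank_self] at hdim
  omega

end TwoByTwo

/-- If `A ∈ C_2` has rank 2, then the face of `C_2` generated by `A` has dimension 0 or 2. -/
theorem faceDim_rank_two_n_eq_two (A : Matrix (Fin 2 × Fin 2) (Fin 2 × Fin 2) ℂ)
    (hA : A ∈ Cset 2) (hrank : A.rank = 2) :
    faceDim (faceGen (Cset 2) A) = 0 ∨ faceDim (faceGen (Cset 2) A) = 2 := by
  obtain ⟨V, rfl⟩ := exists_eq_mul_conjTranspose_of_rank_eq_card (r := Fin 2)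
    (mem_Cset_iff.1 hA).1 (by rw [hrank, Fintype.card_fin])
  obtain ⟨W, hWV⟩ := exists_mul_eq_one_of_rank_eq_card (V := V)
    (by rw [← rank_self_mul_conjTranspose, hrank, Fintype.card_fin])
  by_cases hker : (krausMap V).ker = ⊥
  · left
    rw [faceDim_faceGen_Cset hWV hA, hker, finrank_bot]
  · right
    obtain ⟨V', W', hV', hWV', d, hd, hdker⟩ :=
      exists_factorization_diagonal_mem_ker_krausMap hWV hker
    rw [← hV'] at hA ⊢
    have hone : krausMap V' 1 = 1 := by
      rw [krausMap_apply, congruence_one, (mem_Cset_iff.1 hA).2]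
    rw [faceDim_faceGen_Cset hWV' hA]
    exact finrank_ker_krausMap_eq_two (linearIndependent_krausOp hWV') hone hd hdker
end
end

section
/- A matrix A ∈ C_n belongs to the relative interior of C_n (the interior of C_n with respect to its affine hull) if and only if A is positive definite. -/
open Matrix
open scoped ComplexOrder

noncomputable section

/-!
Relative to the Hermitian matrices, positive definiteness is an open condition, because it only
has to be tested on the compact unit sphere. The affine hull of a set of positive semidefinite
matrices consists of Hermitian matrices, so a positive definite matrix is a relative interior
point of any affine slice of the positive semidefinite cone containing it.

Conversely, suppose the slice contains some positive definite `D`. A segment from `D` to a relative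
interior point `A` can be prolonged beyond `A` inside the slice, which writes `A` as a proper convex
combination of `D` and a positive semidefinite matrix, so `A` is positive definite.

For `Cset n` with `0 < n` one may take `D = n⁻¹ • 1`.
-/

open Topology

section IntrinsicInterior

theorem mem_intrinsicInterior_iff_mem_nhdsWithin {R V P : Type*} [Ring R] [AddCommGroup V]
    [Module R V] [TopologicalSpace P] [AddTorsor V P] {s : Set P} {x : P} :
    x ∈ intrinsicInterior R s ↔ x ∈ s ∧ s ∈ 𝓝[affineSpan R s] x := by
  constructor
  · intro hx
    obtain ⟨y, hy, rfl⟩ := mem_intrinsicInterior.1 hx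
    exact ⟨intrinsicInterior_subset hx,
      preimage_coe_mem_nhds_subtype.1 (mem_interior_iff_mem_nhds.1 hy)⟩
  · rintro ⟨hxs, hs⟩
    exact mem_intrinsicInterior.2 ⟨⟨x, subset_affineSpan R s hxs⟩,
      mem_interior_iff_mem_nhds.2 (preimage_coe_mem_nhds_subtype.2 hs), rfl⟩

theorem exists_mem_openSegment_of_mem_intrinsicInterior {𝕜 V : Type*} [Field 𝕜] [LinearOrder 𝕜]
    [IsStrictOrderedRing 𝕜] [TopologicalSpace 𝕜] [OrderTopology 𝕜] [AddCommGroup V] [Module 𝕜 V]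
    [TopologicalSpace V] [IsTopologicalAddGroup V] [ContinuousSMul 𝕜 V] {s : Set V} {x y : V}
    (hx : x ∈ intrinsicInterior 𝕜 s) (hy : y ∈ s) :
    ∃ z ∈ s, x ∈ openSegment 𝕜 y z := by
  obtain ⟨hxs, hs⟩ := mem_intrinsicInterior_iff_mem_nhdsWithin.1 hx
  have hline : Filter.Tendsto (AffineMap.lineMap y x : 𝕜 → V) (𝓝 1) (𝓝[affineSpan 𝕜 s] x) := by
    refine tendsto_nhdsWithin_iff.2 ⟨?_, .of_forall fun t => ?_⟩
    · simpa using (AffineMap.lineMap_continuous (p := y) (q := x)).tendsto (1 : 𝕜)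
    · exact AffineMap.lineMap_mem t (subset_affineSpan 𝕜 s hy) (subset_affineSpan 𝕜 s hxs)
  obtain ⟨t, hts, ht⟩ : ∃ t : 𝕜, AffineMap.lineMap y x t ∈ s ∧ 1 < t :=
    (((hline.eventually hs).filter_mono nhdsWithin_le_nhds).and
      (self_mem_nhdsWithin (s := Set.Ioi (1 : 𝕜)))).exists
  have hx_eq : AffineMap.lineMap y (AffineMap.lineMap y x t) t⁻¹ = x := by
    simp [AffineMap.lineMap_apply, inv_smul_smul₀ (zero_lt_one.trans ht).ne']
  have hx_mem := lineMap_mem_openSegment 𝕜 y (AffineMap.lineMap y x t)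
    ⟨inv_pos.2 (zero_lt_one.trans ht), inv_lt_one_of_one_lt₀ ht⟩
  rw [hx_eq] at hx_mem
  exact ⟨_, hts, hx_mem⟩

end IntrinsicInterior

section PosDef

variable {m 𝕜 : Type*} [RCLike 𝕜]

theorem posDef_of_forall_mem_sphere [Fintype m] {A : Matrix m m 𝕜} (hA : A.IsHermitian)
    (hpos : ∀ x ∈ Metric.sphere (0 : m → 𝕜) 1, 0 < RCLike.re (star x ⬝ᵥ (A *ᵥ x))) :
    A.PosDef := by
  refine .of_dotProduct_mulVec_pos hA fun x hx => ?_
  refine RCLike.pos_iff.2 ⟨?_, hA.im_star_dotProduct_mulVec_self x⟩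
  have hnorm : 0 < ‖x‖⁻¹ := inv_pos.2 (norm_pos_iff.2 hx)
  have hunit := hpos (‖x‖⁻¹ • x) (by simp [norm_smul, hx])
  rw [mulVec_smul, star_smul, smul_dotProduct, dotProduct_smul, star_trivial, RCLike.smul_re,
    RCLike.smul_re] at hunit
  exact pos_of_mul_pos_right (pos_of_mul_pos_right hunit hnorm.le) hnorm.le

theorem eventually_posDef_nhdsWithin_isHermitian [Finite m] {A : Matrix m m 𝕜} (hA : A.PosDef) :
    ∀ᶠ M in 𝓝[{M | M.IsHermitian}] A, M.PosDef := by
  have := Fintype.ofFinite m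
  have hsphere : ∀ᶠ M in 𝓝 A, ∀ x ∈ Metric.sphere (0 : m → 𝕜) 1,
      0 < RCLike.re (star x ⬝ᵥ (M *ᵥ x)) := by
    refine (isCompact_sphere 0 1).eventually_forall_of_forall_eventually fun x hx => ?_
    have hform : Continuous fun p : Matrix m m 𝕜 × (m → 𝕜) =>
        RCLike.re (star p.2 ⬝ᵥ (p.1 *ᵥ p.2)) :=
      RCLike.continuous_re.comp (by fun_prop)
    exact hform.continuousAt.eventually_const_lt
      (hA.re_dotProduct_pos (ne_zero_of_mem_unit_sphere ⟨x, hx⟩))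
  filter_upwards [nhdsWithin_le_nhds hsphere, self_mem_nhdsWithin] with M hpos hherm
  exact posDef_of_forall_mem_sphere hherm hpos

theorem isHermitian_of_mem_affineSpan {s : Set (Matrix m m 𝕜)} (hs : ∀ M ∈ s, M.IsHermitian)
    {A : Matrix m m 𝕜} (hA : A ∈ affineSpan ℝ s) : A.IsHermitian :=
  affineSpan_le (Q := (selfAdjoint.submodule ℝ (Matrix m m 𝕜)).toAffineSubspace).2 hs hA

theorem posDef_of_mem_intrinsicInterior {s : Set (Matrix m m 𝕜)}
    (hs : ∀ M ∈ s, M.PosSemidef) {D : Matrix m m 𝕜} (hDs : D ∈ s) (hD : D.PosDef)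
    {A : Matrix m m 𝕜} (hA : A ∈ intrinsicInterior ℝ s) : A.PosDef := by
  obtain ⟨B, hBs, a, b, ha, hb, -, rfl⟩ := exists_mem_openSegment_of_mem_intrinsicInterior hA hDs
  exact (hD.smul ha).add_posSemidef ((hs B hBs).smul hb.le)

theorem mem_intrinsicInterior_of_posDef [Finite m] {E : AffineSubspace ℝ (Matrix m m 𝕜)}
    {A : Matrix m m 𝕜} (hAE : A ∈ E) (hA : A.PosDef) :
    A ∈ intrinsicInterior ℝ ({M : Matrix m m 𝕜 | M.PosSemidef} ∩ E) := by
  refine mem_intrinsicInterior_iff_mem_nhdsWithin.2 ⟨⟨hA.posSemidef, hAE⟩, ?_⟩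
  have hspan_herm : (affineSpan ℝ ({M : Matrix m m 𝕜 | M.PosSemidef} ∩ E) : Set (Matrix m m 𝕜)) ⊆
      {M | M.IsHermitian} :=
    fun M hM => isHermitian_of_mem_affineSpan (fun N hN => hN.1.isHermitian) hM
  filter_upwards [nhdsWithin_mono A hspan_herm (eventually_posDef_nhdsWithin_isHermitian hA),
    self_mem_nhdsWithin] with M hM hMspan
  exact ⟨hM.posSemidef, affineSpan_le.2 Set.inter_subset_right hMspan⟩

theorem mem_intrinsicInterior_iff_posDef_general [Finite m] {E : AffineSubspace ℝ (Matrix m m 𝕜)}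
    (hE : ∃ D ∈ E, D.PosDef) {A : Matrix m m 𝕜} (hA : A ∈ E) :
    A ∈ intrinsicInterior ℝ ({M : Matrix m m 𝕜 | M.PosSemidef} ∩ E) ↔ A.PosDef := by
  obtain ⟨D, hDE, hD⟩ := hE
  have hDs : D ∈ {M : Matrix m m 𝕜 | M.PosSemidef} ∩ (E : Set (Matrix m m 𝕜)) :=
    ⟨hD.posSemidef, hDE⟩
  exact ⟨posDef_of_mem_intrinsicInterior (fun M hM => hM.1) hDs hD,
    mem_intrinsicInterior_of_posDef hA⟩

end PosDef

section BlockTrace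

/-- The partial trace over the second tensor factor: the matrix of traces of the blocks
`M (i, ·) (j, ·)`. As a linear map, it exhibits the trace conditions on the blocks as affine. -/
def blockTrace (R : Type*) {ι κ α : Type*} [Fintype κ] [Semiring R] [AddCommMonoid α] [Module R α] :
    Matrix (ι × κ) (ι × κ) α →ₗ[R] Matrix ι ι α where
  toFun M := of fun i j => ∑ k, M (i, k) (j, k)
  map_add' M N := by ext; simp [Finset.sum_add_distrib]
  map_smul' c M := by ext; simp [Finset.smul_sum]

theorem blockTrace_apply {R ι κ α : Type*} [Fintype κ] [Semiring R] [AddCommMonoid α] [Module R α]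
    (M : Matrix (ι × κ) (ι × κ) α) (i j : ι) :
    blockTrace R M i j = ∑ k, M (i, k) (j, k) :=
  rfl

theorem blockTrace_one {R ι κ α : Type*} [DecidableEq ι] [Fintype κ] [DecidableEq κ] [Semiring R]
    [NonAssocSemiring α] [Module R α] :
    blockTrace R (1 : Matrix (ι × κ) (ι × κ) α) = Fintype.card κ • (1 : Matrix ι ι α) := by
  ext i j
  by_cases hij : i = j <;> simp [blockTrace_apply, one_apply, hij]

variable {ι κ 𝕜 : Type*} [DecidableEq ι] [Fintype κ] [RCLike 𝕜]

variable (ι κ 𝕜) in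
/-- The real affine subspace of matrices whose blocks `(i, j)` have trace `δ_{ij}`, encoded as the
fibre of `blockTrace` over the identity matrix. `Cset n` is its positive semidefinite part. -/
def blockTraceFiberOne : AffineSubspace ℝ (Matrix (ι × κ) (ι × κ) 𝕜) :=
  (affineSpan ℝ {1}).comap (blockTrace ℝ).toAffineMap

theorem mem_blockTraceFiberOne {M : Matrix (ι × κ) (ι × κ) 𝕜} :
    M ∈ blockTraceFiberOne ι κ 𝕜 ↔ blockTrace ℝ M = 1 :=
  AffineSubspace.mem_affineSpan_singleton ℝ _

theorem exists_posDef_mem_blockTraceFiberOne (hκ : Nonempty ι → Nonempty κ) :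
    ∃ D ∈ blockTraceFiberOne ι κ 𝕜, D.PosDef := by
  classical
  rcases isEmpty_or_nonempty ι with hι | hι
  · exact ⟨1, mem_blockTraceFiberOne.2 (Subsingleton.elim _ _), .one⟩
  have := hκ hι
  have hcard : (0 : ℝ) < Fintype.card κ := by exact_mod_cast Fintype.card_pos
  refine ⟨(Fintype.card κ : ℝ)⁻¹ • 1, ?_, PosDef.one.smul (inv_pos.2 hcard)⟩
  rw [mem_blockTraceFiberOne, map_smul, blockTrace_one, ← Nat.cast_smul_eq_nsmul ℝ,
    inv_smul_smul₀ hcard.ne']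

theorem Cset_eq_posSemidef_inter_blockTraceFiberOne (n : ℕ) :
    Cset n = {M | M.PosSemidef} ∩ (blockTraceFiberOne (Fin n) (Fin n) ℂ : Set _) := by
  ext M
  simp only [Cset, Set.mem_ofPred_eq, Set.mem_inter_iff, SetLike.mem_coe, mem_blockTraceFiberOne,
    ← Matrix.ext_iff, blockTrace_apply, one_apply]

end BlockTrace

/-- A matrix in `C_n` lies in the relative interior of `C_n` iff it is positive
definite. -/
theorem mem_intrinsicInterior_iff_posDef (n : ℕ)
    (A : Matrix (Fin n × Fin n) (Fin n × Fin n) ℂ) (hA : A ∈ Cset n) :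
    A ∈ intrinsicInterior ℝ (Cset n) ↔ A.PosDef := by
  rw [Cset_eq_posSemidef_inter_blockTraceFiberOne] at hA ⊢
  exact mem_intrinsicInterior_iff_posDef_general (exists_posDef_mem_blockTraceFiberOne id) hA.2
end
end
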